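/- Let ∑_{i=1}^k αᵢ sᵢ ≥ 1 with α ∈ ℝ^k, α ≥ 0, be a valid inequality for conv(P(R,f)) whose induced lattice-free set L_α is a triangle of type T³ with f in the interior of L_α. Then the split rank of ∑_{i=1}^k αᵢ sᵢ ≥ 1 with respect to P(R,f)⁰ is finite. -/

import Mathlib

open Set Pointwise

abbrev Pt : Type := Fin 2 → ℝ

def IsIntPt (x : Pt) : Prop := ∀ j, ∃ z : ℤ, x j = (z : ℝ)

def IsRatPt (x : Pt) : Prop := ∀ j, ∃ q : ℚ, x j = (q : ℝ)

/-- The mixed-integer set `P(R,f)`. -/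
def mixedP (k : ℕ) (r : Fin k → Pt) (f : Pt) : Set (Pt × (Fin k → ℝ)) :=
  {p | IsIntPt p.1 ∧ (∀ i, 0 ≤ p.2 i) ∧ p.1 = f + ∑ i, p.2 i • r i}

/-- The linear relaxation `P(R,f)⁰`. -/
def relaxP (k : ℕ) (r : Fin k → Pt) (f : Pt) : Set (Pt × (Fin k → ℝ)) :=
  {p | (∀ i, 0 ≤ p.2 i) ∧ p.1 = f + ∑ i, p.2 i • r i}

/-- The convex cone generated by a set (all nonnegative combinations). -/
def coneGen (S : Set Pt) : Set Pt :=
  {x | ∃ (n : ℕ) (c : Fin n → ℝ) (v : Fin n → Pt),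
    (∀ j, 0 ≤ c j) ∧ (∀ j, v j ∈ S) ∧ x = ∑ j, c j • v j}

/-- The induced lattice-free set `L_α`. -/
def inducedSet (k : ℕ) (r : Fin k → Pt) (f : Pt) (α : Fin k → ℝ) : Set Pt :=
  convexHull ℝ ({f} ∪ {x | ∃ i, 0 < α i ∧ x = f + (α i)⁻¹ • r i}) +
    coneGen {x | ∃ i, α i = 0 ∧ x = r i}

def LatticeFree (S : Set Pt) : Prop := ∀ x ∈ interior S, ¬ IsIntPt x

/-- Validity of `∑ αᵢ sᵢ ≥ γ` for `conv(P(R,f))`. -/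
def ValidIneq (k : ℕ) (r : Fin k → Pt) (f : Pt) (α : Fin k → ℝ) (γ : ℝ) : Prop :=
  ∀ p ∈ mixedP k r f, γ ≤ ∑ i, α i * p.2 i

noncomputable def affDim {V : Type*} [AddCommGroup V] [Module ℝ V] (S : Set V) : ℕ :=
  Module.finrank ℝ (affineSpan ℝ S).direction

/-- Facet-defining inequality: valid and its face of the closed convex hull has
affine dimension exactly one less. -/
def IsFacet (k : ℕ) (r : Fin k → Pt) (f : Pt) (α : Fin k → ℝ) (γ : ℝ) : Prop :=
  ValidIneq k r f α γ ∧
  affDim {p ∈ closure (convexHull ℝ (mixedP k r f)) | ∑ i, α i * p.2 i = γ} + 1 =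
    affDim (convexHull ℝ (mixedP k r f))

def splitClosure (k : ℕ) (C : Set (Pt × (Fin k → ℝ))) : Set (Pt × (Fin k → ℝ)) :=
  ⋂ (π : Fin 2 → ℤ) (π₀ : ℤ),
    convexHull ℝ ((C ∩ {p | ∑ j, (π j : ℝ) * p.1 j ≤ (π₀ : ℝ)}) ∪
      (C ∩ {p | (π₀ : ℝ) + 1 ≤ ∑ j, (π j : ℝ) * p.1 j}))

def closures (k : ℕ) (r : Fin k → Pt) (f : Pt) : ℕ → Set (Pt × (Fin k → ℝ))
  | 0 => relaxP k r f
  | n + 1 => splitClosure k (closures k r f n)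

/-- The split rank of `∑ αᵢ sᵢ ≥ γ` w.r.t. `P(R,f)⁰`: least `j` such that the
inequality is valid on the `j`-th split closure, `⊤` if none exists. -/
noncomputable def splitRank (k : ℕ) (r : Fin k → Pt) (f : Pt) (α : Fin k → ℝ) (γ : ℝ) : ℕ∞ :=
  sInf {j : ℕ∞ | ∃ n : ℕ, j = (n : ℕ∞) ∧ ∀ p ∈ closures k r f n, γ ≤ ∑ i, α i * p.2 i}

def IsSplitSet (S : Set Pt) : Prop :=
  ∃ (π : Fin 2 → ℤ) (π₀ : ℤ), π ≠ 0 ∧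
    S = {x : Pt | (π₀ : ℝ) ≤ ∑ j, (π j : ℝ) * x j ∧ ∑ j, (π j : ℝ) * x j ≤ (π₀ : ℝ) + 1}

/-- Triangle of type `T¹`. -/
def IsT1 (S : Set Pt) : Prop :=
  ∃ v : Fin 3 → Pt, AffineIndependent ℝ v ∧ (∀ i, IsIntPt (v i)) ∧
    S = convexHull ℝ (Set.range v) ∧
    ∀ i j, i ≠ j → ∃! z, z ∈ openSegment ℝ (v i) (v j) ∧ IsIntPt z

/-- Triangle of type `T^{2A}`. -/
def IsT2A (S : Set Pt) : Prop :=
  ∃ v0 v1 v2 : Pt, AffineIndependent ℝ ![v0, v1, v2] ∧ ¬ IsIntPt v0 ∧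
    S = convexHull ℝ {v0, v1, v2} ∧
    (∃ z1 z2 : Pt, z1 ≠ z2 ∧ IsIntPt z1 ∧ IsIntPt z2 ∧
      z1 ∈ segment ℝ v1 v2 ∧ z2 ∈ segment ℝ v1 v2) ∧
    (∃! z, z ∈ openSegment ℝ v0 v1 ∧ IsIntPt z) ∧
    (∃! z, z ∈ openSegment ℝ v0 v2 ∧ IsIntPt z)

/-- Triangle of type `T^{2B}`. -/
def IsT2B (S : Set Pt) : Prop :=
  ∃ v0 v1 v2 : Pt, AffineIndependent ℝ ![v0, v1, v2] ∧ ¬ IsIntPt v0 ∧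
    S = convexHull ℝ {v0, v1, v2} ∧
    (∃ z1 z2 : Pt, z1 ≠ z2 ∧ IsIntPt z1 ∧ IsIntPt z2 ∧
      z1 ∈ segment ℝ v1 v2 ∧ z2 ∈ segment ℝ v1 v2) ∧
    (∃! z, z ∈ openSegment ℝ v0 v1 ∧ IsIntPt z) ∧
    (∀ z ∈ openSegment ℝ v0 v2, ¬ IsIntPt z)

/-- Triangle of type `T³`. -/
def IsT3 (S : Set Pt) : Prop :=
  ∃ v0 v1 v2 : Pt, AffineIndependent ℝ ![v0, v1, v2] ∧
    ¬ IsIntPt v0 ∧ ¬ IsIntPt v1 ∧ ¬ IsIntPt v2 ∧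
    S = convexHull ℝ {v0, v1, v2} ∧
    (∃! z, z ∈ openSegment ℝ v0 v1 ∧ IsIntPt z) ∧
    (∃! z, z ∈ openSegment ℝ v1 v2 ∧ IsIntPt z) ∧
    (∃! z, z ∈ openSegment ℝ v0 v2 ∧ IsIntPt z) ∧
    (∀ z, IsIntPt z → z ∈ frontier S →
      z ∈ openSegment ℝ v0 v1 ∨ z ∈ openSegment ℝ v1 v2 ∨ z ∈ openSegment ℝ v0 v2)

/-- A quadrilateral with vertices `v 0, v 1, v 2, v 3` in cyclic order; each `vᵢ`
is an extreme point of the hull and each side lies on the boundary. -/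
def IsQuadWith (S : Set Pt) (v : Fin 4 → Pt) : Prop :=
  S = convexHull ℝ (Set.range v) ∧
  (∀ i, v i ∈ Set.extremePoints ℝ S) ∧
  (∀ i : Fin 4, segment ℝ (v i) (v (i + 1)) ⊆ frontier S)

/-- Quadrilateral of type `Q¹`. -/
def IsQ1 (S : Set Pt) : Prop :=
  ∃ v : Fin 4 → Pt, IsQuadWith S v ∧
    (∃ z1 z2 : Pt, z1 ≠ z2 ∧ IsIntPt z1 ∧ IsIntPt z2 ∧
      z1 ∈ segment ℝ (v 0) (v 1) ∧ z2 ∈ segment ℝ (v 0) (v 1)) ∧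
    (∃ j : Fin 4, j ≠ 0 ∧
      (∀ i : Fin 4, i ≠ 0 → i ≠ j → ∃ z, IsIntPt z ∧ z ∈ segment ℝ (v i) (v (i + 1))) ∧
      (∀ z ∈ openSegment ℝ (v j) (v (j + 1)), ¬ IsIntPt z)) ∧
    (∃ T : Set Pt, (IsT1 T ∨ IsT2A T) ∧ S ⊆ T)

/-- Quadrilateral of type `Q²`. -/
def IsQ2 (S : Set Pt) : Prop :=
  ∃ v : Fin 4 → Pt, IsQuadWith S v ∧ (∀ i, ¬ IsIntPt (v i)) ∧
    ∀ i : Fin 4, ∃! z, z ∈ openSegment ℝ (v i) (v (i + 1)) ∧ IsIntPt z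

/-- A sequence of sets carrying affine coordinates `x + y + z = 1` and a height `t`, in which
every linear upper bound on `t` that holds outside an integral split of the `n`-th set holds
on the whole `(n + 1)`-st set. -/
def SplitSeq {V : Type*} (C : ℕ → Set V) (t x y z : V → ℝ) : Prop :=
  (∀ n, ∀ p ∈ C n, x p + y p + z p = 1) ∧
  ∀ (n : ℕ) (P Q R : ℤ) (A B E : ℝ),
    (∀ p ∈ C n, (P * x p + Q * y p + R * z p ≤ 0 ∨ 1 ≤ P * x p + Q * y p + R * z p) →
      t p ≤ A * x p + B * y p + E * z p) →
    ∀ p ∈ C (n + 1), t p ≤ A * x p + B * y p + E * z p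

section SplitSeq

variable {V : Type*} {C : ℕ → Set V} {t x y z : V → ℝ}

theorem SplitSeq.rotate (hC : SplitSeq C t x y z) : SplitSeq C t y z x := by
  refine ⟨fun n p hp => by linarith [hC.1 n p hp], fun n P Q R A B E H p hp => ?_⟩
  have := hC.2 n R P Q E A B
    (fun p hp h => by
      have := H p hp (by rcases h with h | h <;> [left; right] <;> linarith)
      linarith) p hp
  linarith

theorem SplitSeq.bound_le (hC : SplitSeq C t x y z) {A B E : ℝ} {m n : ℕ} (hmn : m ≤ n)
    (h : ∀ p ∈ C m, t p ≤ A * x p + B * y p + E * z p) :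
    ∀ p ∈ C n, t p ≤ A * x p + B * y p + E * z p := by
  induction n, hmn using Nat.le_induction with
  | base => exact h
  | succ n _ ih => exact hC.2 n 0 0 0 A B E fun p hp _ => ih p hp

theorem SplitSeq.pair_bound_le (hC : SplitSeq C t x y z) {a b : ℝ} {m n : ℕ} (hmn : m ≤ n)
    (h : ∀ p ∈ C m, t p ≤ a * y p + b * z p) : ∀ p ∈ C n, t p ≤ a * y p + b * z p := by
  simpa using hC.bound_le (A := 0) hmn (by simpa using h)

/-- Cutting with the split `0 ≤ y ≤ 1` lowers the height over the corner `x ≤ 0`. -/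
theorem SplitSeq.slanted_bound (hC : SplitSeq C t x y z) {n : ℕ} {h c K a₂ b₂ a₃ b₃ : ℝ}
    (hh : 0 ≤ h) (hc : 0 < c) (hK : 0 < K)
    (ht : ∀ p ∈ C n, t p ≤ h)
    (h₂ : ∀ p ∈ C n, t p ≤ a₂ * z p + b₂ * x p)
    (h₃ : ∀ p ∈ C n, t p ≤ a₃ * x p + b₃ * y p)
    (ha₂ : 0 ≤ a₂) (hb₃ : 0 ≤ b₃) (hca : c ≤ a₃) (haK : a₃ ≤ K)
    (hcb : c ≤ b₂ - a₂) (hbK : b₂ - a₂ ≤ K) :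
    ∀ p ∈ C (n + 1), t p ≤ c * x p + (1 - c / K) * h := by
  set d := (1 - c / K) * h with hd
  have hKd : K * d = (K - c) * h := by rw [hd]; field_simp
  have hcK : c ≤ K := hca.trans haK
  have hd0 : 0 ≤ d := by
    have : 0 ≤ (K - c) * h := mul_nonneg (by linarith) hh
    by_contra hneg
    nlinarith
  have key : ∀ p ∈ C n, ∀ s, c ≤ s → s ≤ K → t p ≤ s * x p → t p ≤ c * x p + d := by
    intro p hp s h1 h2 h3
    have h4 := ht p hp
    rcases le_total (x p) 0 with hx | hx
    · nlinarith
    · rcases le_total (K * x p) h with h5 | h5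
      · have : t p ≤ K * x p := by nlinarith
        have h6 : K * ((K - c) * x p) ≤ K * d := by rw [hKd]; nlinarith
        have := le_of_mul_le_mul_left h6 hK
        nlinarith
      · have h6 : K * (h - c * x p) ≤ K * d := by rw [hKd]; nlinarith
        have := le_of_mul_le_mul_left h6 hK
        linarith
  intro p hp
  have := hC.2 n 0 1 0 (c + d) d d (fun p hp hs => by
    have hsum := hC.1 n p hp
    have : t p ≤ c * x p + d := by
      rcases hs with hs | hs
      · refine key p hp a₃ hca haK ((h₃ p hp).trans ?_)
        push_cast at hs
        nlinarith
      · refine key p hp (b₂ - a₂) hcb hbK ((h₂ p hp).trans ?_)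
        push_cast at hs
        nlinarith
    nlinarith) p hp
  nlinarith [hC.1 (n + 1) p hp]

/-- If the height is at most `h` over all three corners, one further split bounds it globally. -/
theorem SplitSeq.const_bound_of_corners (hC : SplitSeq C t x y z) {n : ℕ} {h : ℝ}
    (hx : ∀ p ∈ C n, x p ≤ 0 → t p ≤ h) (hy : ∀ p ∈ C n, y p ≤ 0 → t p ≤ h)
    (hz : ∀ p ∈ C n, z p ≤ 0 → t p ≤ h) : ∀ p ∈ C (n + 1), t p ≤ h := by
  intro p hp
  have := hC.2 n 1 0 0 h h h (fun p hp hs => by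
    have hsum := hC.1 n p hp
    have : t p ≤ h := by
      push_cast at hs
      rcases hs with hs | hs
      · exact hx p hp (by linarith)
      · rcases le_total (y p) 0 with h' | h'
        · exact hy p hp h'
        · exact hz p hp (by linarith)
    linear_combination this - h * hsum) p hp
  linear_combination this + h * hC.1 (n + 1) p hp

/-- The pyramid over a type-3 triangle in coordinates relative to the three integer points on
its sides. -/
structure Pyramid {V : Type*} (S : Set V) (t x y z : V → ℝ) (a₁ b₁ a₂ b₂ a₃ b₃ : ℝ) : Prop where
  le₁ : ∀ p ∈ S, t p ≤ a₁ * y p + b₁ * z p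
  le₂ : ∀ p ∈ S, t p ≤ a₂ * z p + b₂ * x p
  le₃ : ∀ p ∈ S, t p ≤ a₃ * x p + b₃ * y p
  pos₁ : 0 < a₁
  pos₂ : 0 < a₂
  pos₃ : 0 < a₃
  lt₁ : a₁ < b₁
  lt₂ : a₂ < b₂
  lt₃ : a₃ < b₃

variable {a₁ b₁ a₂ b₂ a₃ b₃ : ℝ}

theorem Pyramid.rotate {S : Set V} (h : Pyramid S t x y z a₁ b₁ a₂ b₂ a₃ b₃) :
    Pyramid S t y z x a₂ b₂ a₃ b₃ a₁ b₁ :=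
  ⟨h.le₂, h.le₃, h.le₁, h.pos₂, h.pos₃, h.pos₁, h.lt₂, h.lt₃, h.lt₁⟩

theorem Pyramid.mono (hC : SplitSeq C t x y z) {m n : ℕ} (hmn : m ≤ n)
    (h : Pyramid (C m) t x y z a₁ b₁ a₂ b₂ a₃ b₃) :
    Pyramid (C n) t x y z a₁ b₁ a₂ b₂ a₃ b₃ := by
  exact ⟨hC.pair_bound_le hmn h.le₁, hC.rotate.pair_bound_le hmn h.le₂,
    hC.rotate.rotate.pair_bound_le hmn h.le₃, h.pos₁, h.pos₂, h.pos₃, h.lt₁, h.lt₂, h.lt₃⟩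

theorem SplitSeq.exists_height_le (hC : SplitSeq C t x y z)
    (hP : Pyramid (C 0) t x y z a₁ b₁ a₂ b₂ a₃ b₃) (h1 : ∀ p ∈ C 0, t p ≤ 1)
    {h : ℝ} (hh : 0 < h) : ∃ n, ∀ p ∈ C n, t p ≤ h := by
  have p₁ := hP.pos₁
  have p₂ := hP.pos₂
  have p₃ := hP.pos₃
  have q₁ := hP.lt₁
  have q₂ := hP.lt₂
  have q₃ := hP.lt₃
  obtain ⟨c, hc, hc₁, hc₂, hc₃, hc₄, hc₅, hc₆⟩ : ∃ c, 0 < c ∧ c ≤ a₁ ∧ c ≤ a₂ ∧ c ≤ a₃ ∧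
      c ≤ b₁ - a₁ ∧ c ≤ b₂ - a₂ ∧ c ≤ b₃ - a₃ :=
    ⟨min (min a₁ (min a₂ a₃)) (min (b₁ - a₁) (min (b₂ - a₂) (b₃ - a₃))), by
      simp [*], by simp, by simp, by simp, by simp, by simp, by simp⟩
  obtain ⟨K, hK₁, hK₂, hK₃⟩ : ∃ K, b₁ ≤ K ∧ b₂ ≤ K ∧ b₃ ≤ K :=
    ⟨max b₁ (max b₂ b₃), by simp, by simp, by simp⟩
  have hK : 0 < K := by linarith
  set θ := 1 - c / K with hθ
  have hθ0 : 0 ≤ θ := by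
    rw [hθ, sub_nonneg, div_le_one hK]; linarith
  have hθ1 : θ < 1 := by
    rw [hθ]; linarith [div_pos hc hK]
  have step : ∀ m, ∀ p ∈ C (2 * m), t p ≤ θ ^ m := by
    intro m
    induction m with
    | zero => simpa using h1
    | succ m ih =>
      have hM := hP.mono hC (Nat.zero_le (2 * m))
      have h0 : 0 ≤ θ ^ m := pow_nonneg hθ0 m
      have sx := hC.slanted_bound h0 hc hK ih hM.le₂ hM.le₃ (by linarith) (by linarith)
        (by linarith) (by linarith) (by linarith) (by linarith)
      have sy := hC.rotate.slanted_bound h0 hc hK ih hM.le₃ hM.le₁ (by linarith) (by linarith)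
        (by linarith) (by linarith) (by linarith) (by linarith)
      have sz := hC.rotate.rotate.slanted_bound h0 hc hK ih hM.le₁ hM.le₂ (by linarith)
        (by linarith) (by linarith) (by linarith) (by linarith) (by linarith)
      have := hC.const_bound_of_corners (n := 2 * m + 1) (h := θ ^ (m + 1))
        (fun p hp h => by have := sx p hp; rw [pow_succ']; nlinarith)
        (fun p hp h => by have := sy p hp; rw [pow_succ']; nlinarith)
        (fun p hp h => by have := sz p hp; rw [pow_succ']; nlinarith)
      simpa [mul_add] using this
  obtain ⟨m, hm⟩ := exists_pow_lt_of_lt_one hh hθ1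
  exact ⟨2 * m, fun p hp => (step m p hp).trans hm.le⟩

theorem exists_mul_le_int_le (ξ : ℝ) {ε : ℝ} (hε : 0 < ε) :
    ∃ (q : ℕ) (p : ℤ), 0 < q ∧ 0 ≤ p - q * ξ ∧ p - q * ξ ≤ ε := by
  obtain ⟨n, hn⟩ := exists_nat_one_div_lt hε
  obtain ⟨q, hq, -, hp⟩ := Real.exists_nat_abs_mul_sub_round_le ξ (Nat.succ_pos n)
  set p : ℤ := round (q * ξ)
  have hb : |(q : ℝ) * ξ - p| ≤ 1 / ((n : ℝ) + 1) := by
    refine hp.trans ?_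
    push_cast
    exact one_div_le_one_div_of_le (by positivity) (by linarith)
  rw [abs_le] at hb
  rcases le_or_gt ((q : ℝ) * ξ - p) 0 with h | h
  · exact ⟨q, p, hq, by linarith, by linarith⟩
  · set δ := (q : ℝ) * ξ - p with hδ
    have hδ1 : δ ≤ 1 := hb.2.trans (by
      rw [div_le_one (by positivity)]; linarith [(Nat.cast_nonneg n : (0 : ℝ) ≤ n)])
    have hfl := Nat.floor_le (a := 1 / δ) (by positivity)
    have hlt := Nat.lt_floor_add_one (1 / δ)
    rw [le_div_iff₀ h] at hfl
    rw [div_lt_iff₀ h] at hlt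
    have hpos : 0 < ⌊1 / δ⌋₊ := Nat.floor_pos.mpr (by rw [le_div_iff₀ h]; linarith)
    refine ⟨⌊1 / δ⌋₊ * q, ⌊1 / δ⌋₊ * p + 1, Nat.mul_pos hpos hq, ?_, ?_⟩ <;>
    · push_cast
      nlinarith

/-- A split whose boundary passes through the integer point `x = 1` almost parallel to the side
of the triangle flattens the height near that point. -/
theorem SplitSeq.exists_flat_bound (hC : SplitSeq C t x y z)
    (hP : Pyramid (C 0) t x y z a₁ b₁ a₂ b₂ a₃ b₃) (h1 : ∀ p ∈ C 0, t p ≤ 1)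
    {ε : ℝ} (hε : 0 < ε) :
    ∃ a b n, 0 ≤ a ∧ a ≤ ε ∧ 0 ≤ b ∧ b ≤ ε ∧ ∀ p ∈ C n, t p ≤ a * y p + b * z p := by
  have p₁ := hP.pos₁
  have p₂ := hP.pos₂
  have q₁ := hP.lt₁
  have q₂ := hP.lt₂
  have hb₁ : 0 < b₁ := p₁.trans q₁
  have hb₂ : 0 < b₂ := p₂.trans q₂
  obtain ⟨e, he, he1, heb⟩ : ∃ e, 0 < e ∧ e < 1 ∧ e * b₁ ≤ ε := by
    refine ⟨min (1 / 2) (ε / b₁), by positivity, by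
      exact (min_le_left _ _).trans_lt (by norm_num), ?_⟩
    calc _ ≤ ε / b₁ * b₁ := by gcongr; exact min_le_right _ _
      _ = ε := by field_simp
  -- on the pyramid, `W * t ≤ M - s * y`
  set W := b₂ - a₂ + b₁ with hW
  set s := b₁ * b₂ - a₁ * b₂ + a₁ * a₂ with hs
  set M := b₁ * b₂ with hM
  have hW0 : 0 < W := by linarith
  have hs0 : 0 < s := by nlinarith [mul_pos p₁ p₂]
  have hM0 : 0 < M := by positivity
  obtain ⟨θ₀, hθ₀, hθ₁, hθ₂, hθ₃⟩ : ∃ θ₀, 0 < θ₀ ∧ θ₀ * M * 2 ≤ e * s ∧ θ₀ * b₁ * W ≤ s ∧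
      θ₀ * b₁ ≤ e * a₁ := by
    refine ⟨min (e * s / (M * 2)) (min (s / (b₁ * W)) (e * a₁ / b₁)), by positivity, ?_, ?_, ?_⟩
    · calc _ ≤ e * s / (M * 2) * M * 2 := by gcongr; exact min_le_left _ _
        _ = _ := by field_simp
    · calc _ ≤ s / (b₁ * W) * b₁ * W := by
            gcongr; exact (min_le_right _ _).trans (min_le_left _ _)
        _ = _ := by field_simp
    · calc _ ≤ e * a₁ / b₁ * b₁ := by
            gcongr; exact (min_le_right _ _).trans (min_le_right _ _)
        _ = _ := by field_simp
  obtain ⟨q, P, hq, hPq, hPq'⟩ := exists_mul_le_int_le (a₁ / b₁) hθ₀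
  set θ := (P : ℝ) - q * (a₁ / b₁) with hθ
  have hqr : (1 : ℝ) ≤ q := by exact_mod_cast hq
  -- `P * y + q * z = l₁ / N' + θ * y` with `N' = b₁ / q`
  set N' := b₁ / q with hN'
  have hN0 : 0 < N' := by positivity
  have hNb : N' ≤ b₁ := div_le_self hb₁.le hqr
  have hform : ∀ u v : ℝ, N' * (P * u + q * v) = a₁ * u + b₁ * v + N' * θ * u := by
    intro u v
    rw [hθ, hN']
    field_simp
    ring
  obtain ⟨n, hn⟩ := hC.exists_height_le hP h1 (h := e * N' / 2) (by positivity)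
  have hMn := hP.mono hC (Nat.zero_le n)
  set ν := (1 - e) * N' * θ with hν
  have hν0 : 0 ≤ ν := by
    rw [hν]; exact mul_nonneg (mul_nonneg (by linarith) hN0.le) hPq
  have hνN : ν ≤ N' * θ := by
    rw [hν]; nlinarith [mul_nonneg hN0.le hPq]
  have hNθ : N' * θ ≤ θ₀ * b₁ := by
    calc N' * θ ≤ b₁ * θ₀ := by gcongr
      _ = _ := by ring
  refine ⟨e * a₁ - ν, e * b₁, n + 1, by linarith, by nlinarith, by positivity, heb, ?_⟩
  intro p hp
  have := hC.2 n 0 P q 0 (e * a₁ - ν) (e * b₁) (fun p hp hsplit => by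
    have l₁ := hMn.le₁ p hp
    have l₂ := hMn.le₂ p hp
    have lh := hn p hp
    have hsum := hC.1 n p hp
    have hf := hform (y p) (z p)
    push_cast at hsplit
    set w := (P : ℝ) * y p + q * z p with hw
    have goal_eq : 0 * x p + (e * a₁ - ν) * y p + e * b₁ * z p =
        e * (a₁ * y p + b₁ * z p) - ν * y p := by ring
    rw [goal_eq]
    have hl₁ : a₁ * y p + b₁ * z p = N' * w - N' * θ * y p := by linarith
    have hsw : w ≤ 0 ∨ 1 ≤ w := by
      rcases hsplit with h | h <;> [left; right] <;> linarith
    rcases hsw with h | h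
    · have : e * (a₁ * y p + b₁ * z p) - ν * y p =
          (a₁ * y p + b₁ * z p) - (1 - e) * N' * w := by
        rw [hν]; linear_combination (e - 1) * hl₁
      have h2 : (1 - e) * N' * w ≤ 0 :=
        mul_nonpos_of_nonneg_of_nonpos (mul_nonneg (by linarith) hN0.le) h
      linarith
    · have h2 : e * N' - N' * θ * y p ≤ e * (a₁ * y p + b₁ * z p) - ν * y p := by
        have : e * (a₁ * y p + b₁ * z p) - ν * y p = e * N' * w - N' * θ * y p := by
          rw [hν]; linear_combination e * hl₁
        rw [this]
        have : e * N' * 1 ≤ e * N' * w := by gcongr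
        linarith
      refine le_trans ?_ h2
      have hWt : W * t p ≤ M - s * y p := by
        have e1 : (b₂ - a₂) * t p ≤ (b₂ - a₂) * (a₁ * y p + b₁ * z p) :=
          mul_le_mul_of_nonneg_left l₁ (by linarith)
        have e2 : b₁ * t p ≤ b₁ * (a₂ * z p + b₂ * x p) := mul_le_mul_of_nonneg_left l₂ hb₁.le
        have hx : x p = 1 - y p - z p := by linarith
        rw [hx] at e2
        rw [hW, hs, hM]
        nlinarith
      have hNθ0 : 0 ≤ N' * θ := mul_nonneg hN0.le hPq
      have hNM : N' * θ * M * 2 ≤ e * N' * s := by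
        have h3 : θ * M ≤ θ₀ * M := mul_le_mul_of_nonneg_right hPq' hM0.le
        have h4 : N' * (θ * M * 2) ≤ N' * (e * s) :=
          mul_le_mul_of_nonneg_left (by linarith) hN0.le
        linarith
      rcases le_total (s * y p) M with h3 | h3
      · have : N' * θ * (s * y p) * 2 ≤ e * N' * s := by
          have := mul_le_mul_of_nonneg_left h3 hNθ0
          linarith
        have : s * (N' * θ * y p) ≤ s * (e * N' / 2) := by linarith
        have := le_of_mul_le_mul_left this hs0
        linarith
      · have hθW : N' * θ * W ≤ s := (mul_le_mul_of_nonneg_right hNθ hW0.le).trans hθ₂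
        have h4 : N' * θ * W * (s * y p - M) ≤ s * (s * y p - M) :=
          mul_le_mul_of_nonneg_right hθW (by linarith)
        have h5 : s * (W * t p) ≤ s * (M - s * y p) := mul_le_mul_of_nonneg_left hWt hs0.le
        have h6 : W * (N' * θ * M * 2) ≤ W * (e * N' * s) := mul_le_mul_of_nonneg_left hNM hW0.le
        have h7 : 0 ≤ W * (e * N' * s) := by positivity
        have h8 : (W * s) * t p ≤ (W * s) * (e * N' - N' * θ * y p) := by linarith
        exact le_of_mul_le_mul_left h8 (by positivity)) p hp
  linarith

/-- The height vanishes over a corner once it is flat near both integer points adjacent to it. -/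
theorem SplitSeq.corner_bound (hC : SplitSeq C t x y z) {n : ℕ}
    (hP : Pyramid (C n) t x y z a₁ b₁ a₂ b₂ a₃ b₃) {ε c₁ d₁ c₃ d₃ : ℝ}
    (hε₁ : ε ≤ a₁) (hε₃ : ε ≤ b₃ - a₃)
    (hc₁ : c₁ ≤ ε) (hd₁ : 0 ≤ d₁) (hc₃ : 0 ≤ c₃) (hd₃ : d₃ ≤ ε)
    (h₁ : ∀ p ∈ C n, t p ≤ c₁ * y p + d₁ * z p)
    (h₃ : ∀ p ∈ C n, t p ≤ c₃ * x p + d₃ * y p) :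
    ∀ p ∈ C (n + 1), t p ≤ ε * y p := by
  intro p hp
  have p₁ := hP.pos₁
  have p₃ := hP.pos₃
  have q₁ := hP.lt₁
  have := hC.2 n 0 0 1 0 ε 0 (fun p hp hs => by
    have hsum := hC.1 n p hp
    have i₁ := h₁ p hp
    have i₃ := h₃ p hp
    have l₁ := hP.le₁ p hp
    have l₃ := hP.le₃ p hp
    push_cast at hs
    rcases hs with hs | hs <;> rcases le_total (y p) 0 with hy | hy <;> nlinarith) p hp
  linarith

theorem SplitSeq.exists_height_nonpos (hC : SplitSeq C t x y z)
    (hP : Pyramid (C 0) t x y z a₁ b₁ a₂ b₂ a₃ b₃) (h1 : ∀ p ∈ C 0, t p ≤ 1) :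
    ∃ n, ∀ p ∈ C n, t p ≤ 0 := by
  have p₁ := hP.pos₁
  have p₂ := hP.pos₂
  have p₃ := hP.pos₃
  have q₁ := hP.lt₁
  have q₂ := hP.lt₂
  have q₃ := hP.lt₃
  obtain ⟨ε, hε, hε₁, hε₂, hε₃, hε₄, hε₅, hε₆⟩ : ∃ ε, 0 < ε ∧ ε ≤ a₁ ∧ ε ≤ a₂ ∧ ε ≤ a₃ ∧
      ε ≤ b₁ - a₁ ∧ ε ≤ b₂ - a₂ ∧ ε ≤ b₃ - a₃ :=
    ⟨min (min a₁ (min a₂ a₃)) (min (b₁ - a₁) (min (b₂ - a₂) (b₃ - a₃))), by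
      simp [*], by simp, by simp, by simp, by simp, by simp, by simp⟩
  obtain ⟨c₁, d₁, n₁, u₁, u₁', w₁, w₁', f₁⟩ := hC.exists_flat_bound hP h1 hε
  obtain ⟨c₂, d₂, n₂, u₂, u₂', w₂, w₂', f₂⟩ := hC.rotate.exists_flat_bound hP.rotate h1 hε
  obtain ⟨c₃, d₃, n₃, u₃, u₃', w₃, w₃', f₃⟩ :=
    hC.rotate.rotate.exists_flat_bound hP.rotate.rotate h1 hε
  obtain ⟨n, hn₁, hn₂, hn₃⟩ : ∃ n, n₁ ≤ n ∧ n₂ ≤ n ∧ n₃ ≤ n :=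
    ⟨max n₁ (max n₂ n₃), by simp, by simp, by simp⟩
  have hMn := hP.mono hC (Nat.zero_le n)
  have g₁ := hC.pair_bound_le hn₁ f₁
  have g₂ := hC.rotate.pair_bound_le hn₂ f₂
  have g₃ := hC.rotate.rotate.pair_bound_le hn₃ f₃
  have ky := hC.corner_bound hMn hε₁ hε₆ u₁' w₁ u₃ w₃' g₁ g₃
  have kz := hC.rotate.corner_bound hMn.rotate hε₂ hε₄ u₂' w₂ u₁ w₁' g₂ g₁
  have kx := hC.rotate.rotate.corner_bound hMn.rotate.rotate hε₃ hε₅ u₃' w₃ u₂ w₂' g₃ g₂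
  exact ⟨n + 1 + 1, hC.const_bound_of_corners
    (fun p hp h => by have := kx p hp; nlinarith)
    (fun p hp h => by have := ky p hp; nlinarith)
    (fun p hp h => by have := kz p hp; nlinarith)⟩

end SplitSeq

theorem SplitSeq.swap {V : Type*} {C : ℕ → Set V} {t x y z : V → ℝ}
    (hC : SplitSeq C t x y z) : SplitSeq C t y x z := by
  refine ⟨fun n p hp => by linarith [hC.1 n p hp], fun n P Q R A B E H p hp => ?_⟩
  have := hC.2 n Q P R B A E
    (fun p hp h => by
      have := H p hp (by rcases h with h | h <;> [left; right] <;> linarith)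
      linarith) p hp
  linarith

section IntegerPoints

theorem IsIntPt.add {x y : Pt} (hx : IsIntPt x) (hy : IsIntPt y) : IsIntPt (x + y) := fun j => by
  obtain ⟨m, hm⟩ := hx j
  obtain ⟨n, hn⟩ := hy j
  exact ⟨m + n, by simp [hm, hn]⟩

theorem IsIntPt.sub {x y : Pt} (hx : IsIntPt x) (hy : IsIntPt y) : IsIntPt (x - y) := fun j => by
  obtain ⟨m, hm⟩ := hx j
  obtain ⟨n, hn⟩ := hy j
  exact ⟨m - n, by simp [hm, hn]⟩

theorem IsIntPt.zsmul {x : Pt} (hx : IsIntPt x) (n : ℤ) : IsIntPt ((n : ℝ) • x) := fun j => by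
  obtain ⟨m, hm⟩ := hx j
  exact ⟨n * m, by simp [hm]⟩

theorem AffineMap.apply_eq_linear_add (g : Pt →ᵃ[ℝ] ℝ) (x : Pt) : g x = g.linear x + g 0 := by
  simpa using g.map_vadd 0 x

theorem AffineMap.exists_int_coeffs (g : Pt →ᵃ[ℝ] ℝ)
    (hg : ∀ x, IsIntPt x → ∃ n : ℤ, g x = n) :
    ∃ (π : Fin 2 → ℤ) (m : ℤ), ∀ x, g x = ∑ j, (π j : ℝ) * x j + m := by
  obtain ⟨m, hm⟩ := hg 0 fun j => ⟨0, by simp⟩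
  have hs : ∀ i : Fin 2, ∃ n : ℤ, g.linear (Pi.single i 1) = n := fun i => by
    obtain ⟨n, hn⟩ := hg (Pi.single i 1) fun j => ⟨if j = i then 1 else 0, by
      by_cases h : j = i <;> simp [h]⟩
    refine ⟨n - m, ?_⟩
    rw [g.apply_eq_linear_add, hm] at hn
    push_cast
    linarith
  choose π hπ using hs
  refine ⟨π, m, fun x => ?_⟩
  rw [g.apply_eq_linear_add, hm]
  congr 1
  conv_lhs => rw [pi_eq_sum_univ' x]
  simp only [map_sum, map_smul, smul_eq_mul]
  refine Finset.sum_congr rfl fun i _ => ?_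
  rw [← hπ i, mul_comm]

/-- The barycentric coordinates of an integral triangle containing no integer points besides its
vertices are integral. -/
theorem AffineBasis.coord_integral_of_empty (c : AffineBasis (Fin 3) ℝ Pt)
    (hint : ∀ i, IsIntPt (c i))
    (hempty : ∀ x, IsIntPt x → (∀ i, 0 ≤ c.coord i x) → ∃ j, x = c j)
    {x : Pt} (hx : IsIntPt x) (i : Fin 3) : ∃ n : ℤ, c.coord i x = n := by
  have hsum : ∀ x, c.coord 0 x + c.coord 1 x + c.coord 2 x = 1 := fun x => by
    have h := c.sum_coord_apply_eq_one x
    rwa [Fin.sum_univ_three] at h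
  have hlin : ∀ i (a b : ℝ) (p q r s : Pt),
      c.coord i (p + a • (q - s) + b • (r - s)) =
        c.coord i p + a * (c.coord i q - c.coord i s) + b * (c.coord i r - c.coord i s) := by
    intro i a b p q r s
    simp only [(c.coord i).apply_eq_linear_add (_ + _), (c.coord i).apply_eq_linear_add p,
      (c.coord i).apply_eq_linear_add q, (c.coord i).apply_eq_linear_add r,
      (c.coord i).apply_eq_linear_add s, map_add, map_smul, map_sub, smul_eq_mul]
    ring
  set m := ⌊c.coord 1 x⌋
  set n := ⌊c.coord 2 x⌋
  set w : Pt := x + ((-m : ℤ) : ℝ) • (c 1 - c 0) + ((-n : ℤ) : ℝ) • (c 2 - c 0) with hw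
  have hwint : IsIntPt w :=
    (hx.add (((hint 1).sub (hint 0)).zsmul _)).add (((hint 2).sub (hint 0)).zsmul _)
  have h1 : c.coord 1 w = Int.fract (c.coord 1 x) := by
    rw [hw, hlin, ← Int.self_sub_floor]
    rw [c.coord_apply_eq, c.coord_apply_ne (by decide), c.coord_apply_ne (by decide)]
    push_cast
    ring
  have h2 : c.coord 2 w = Int.fract (c.coord 2 x) := by
    rw [hw, hlin, ← Int.self_sub_floor]
    rw [c.coord_apply_eq, c.coord_apply_ne (by decide), c.coord_apply_ne (by decide)]
    push_cast
    ring
  have s0 := Int.fract_nonneg (c.coord 1 x)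
  have s1 := Int.fract_lt_one (c.coord 1 x)
  have t0 := Int.fract_nonneg (c.coord 2 x)
  have t1 := Int.fract_lt_one (c.coord 2 x)
  have key : Int.fract (c.coord 1 x) = 0 ∧ Int.fract (c.coord 2 x) = 0 := by
    rcases le_total 0 (c.coord 0 w) with h0 | h0
    · obtain ⟨j, hj⟩ := hempty w hwint (fun i => by
        fin_cases i
        · exact h0
        · exact h1 ▸ s0
        · exact h2 ▸ t0)
      rw [hj, c.coord_apply] at h1 h2
      constructor
      · split_ifs at h1 <;> linarith
      · split_ifs at h2 <;> linarith
    · have hsw := hsum w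
      set w' : Pt := c 1 + (1 : ℝ) • (c 2 - w) + (0 : ℝ) • (c 2 - w) with hw'
      have hw'int : IsIntPt w' := by
        rw [hw']; simpa using (hint 1).add ((hint 2).sub hwint)
      have e0 : c.coord 0 w' = - c.coord 0 w := by rw [hw', hlin]; simp [c.coord_apply]
      have e1 : c.coord 1 w' = 1 - c.coord 1 w := by
        rw [hw', hlin]; simp [c.coord_apply]; ring
      have e2 : c.coord 2 w' = 1 - c.coord 2 w := by rw [hw', hlin]; simp [c.coord_apply]
      obtain ⟨j, hj⟩ := hempty w' hw'int (fun i => by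
        fin_cases i
        · change 0 ≤ c.coord 0 w'; linarith
        · change 0 ≤ c.coord 1 w'; linarith
        · change 0 ≤ c.coord 2 w'; linarith)
      rw [hj, c.coord_apply] at e1 e2
      split_ifs at e1 e2 <;> constructor <;> linarith
  have c1 : c.coord 1 x = m := by linarith [Int.floor_add_fract (c.coord 1 x), key.1]
  have c2 : c.coord 2 x = n := by linarith [Int.floor_add_fract (c.coord 2 x), key.2]
  fin_cases i
  · exact ⟨1 - m - n, by push_cast; linarith [hsum x]⟩
  · exact ⟨m, c1⟩
  · exact ⟨n, c2⟩

end IntegerPoints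

section InducedSet

variable {k : ℕ} {r : Fin k → Pt} {f : Pt} {α : Fin k → ℝ}

theorem subset_inducedSet :
    convexHull ℝ ({f} ∪ {x | ∃ i, 0 < α i ∧ x = f + (α i)⁻¹ • r i}) ⊆ inducedSet k r f α :=
  fun x hx => Set.mem_add.mpr ⟨x, hx, 0, ⟨0, Fin.elim0, Fin.elim0, by simp⟩, by simp⟩

theorem add_inv_smul_mem_inducedSet {i : Fin k} (hi : 0 < α i) :
    f + (α i)⁻¹ • r i ∈ inducedSet k r f α :=
  subset_inducedSet (subset_convexHull ℝ _ (Or.inr ⟨i, hi, rfl⟩))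

theorem add_smul_mem_inducedSet {i : Fin k} (hi : α i = 0) {s : ℝ} (hs : 0 ≤ s) :
    f + s • r i ∈ inducedSet k r f α :=
  Set.add_mem_add (subset_convexHull ℝ _ (Or.inl rfl))
    ⟨1, fun _ => s, fun _ => r i, fun _ => hs, fun _ => ⟨i, hi, rfl⟩, by simp⟩

theorem exists_weights_of_mem_inducedSet {x : Pt} (hx : x ∈ inducedSet k r f α) :
    ∃ s : Fin k → ℝ, (∀ i, 0 ≤ s i) ∧ x = f + ∑ i, s i • r i ∧ ∑ i, α i * s i ≤ 1 := by
  set T : Set Pt :=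
    {x | ∃ s : Fin k → ℝ, (∀ i, 0 ≤ s i) ∧ x = f + ∑ i, s i • r i ∧ ∑ i, α i * s i ≤ 1}
  have hconv : Convex ℝ T := by
    rintro _ ⟨s, hs, rfl, hs1⟩ _ ⟨s', hs', rfl, hs1'⟩ a b ha hb hab
    refine ⟨a • s + b • s', fun i => ?_, ?_, ?_⟩
    · have := mul_nonneg ha (hs i)
      have := mul_nonneg hb (hs' i)
      simp only [Pi.add_apply, Pi.smul_apply, smul_eq_mul]
      linarith
    · have hf : f = a • f + b • f := by rw [← add_smul, hab, one_smul]
      simp only [Pi.add_apply, Pi.smul_apply, smul_eq_mul, add_smul, Finset.sum_add_distrib,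
        mul_smul, ← Finset.smul_sum, smul_add]
      conv_rhs => rw [hf]
      abel
    · have : ∑ i, α i * (a • s + b • s') i = a * ∑ i, α i * s i + b * ∑ i, α i * s' i := by
        rw [Finset.mul_sum, Finset.mul_sum, ← Finset.sum_add_distrib]
        refine Finset.sum_congr rfl fun i _ => ?_
        simp only [Pi.add_apply, Pi.smul_apply, smul_eq_mul]
        ring
      rw [this]
      nlinarith
  obtain ⟨u, hu, w, ⟨n, c, v, hc, hv, rfl⟩, rfl⟩ := Set.mem_add.mp hx
  have huT : u ∈ T := by
    refine convexHull_min ?_ hconv hu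
    rintro _ (rfl | ⟨i, hi, rfl⟩)
    · exact ⟨0, by simp, by simp, by simp⟩
    · refine ⟨Pi.single i (α i)⁻¹, fun j => ?_, ?_, ?_⟩
      · by_cases h : j = i
        · subst h; simp [hi.le]
        · simp [h]
      · simp [Pi.single_apply, ite_smul]
      · simp [Pi.single_apply, hi.ne']
  choose ι hι using hv
  obtain ⟨s, hs, rfl, hs1⟩ := huT
  refine ⟨s + ∑ j, c j • Pi.single (ι j) 1, fun i => ?_, ?_, ?_⟩
  · simp only [Pi.add_apply, Finset.sum_apply, Pi.smul_apply, smul_eq_mul]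
    refine add_nonneg (hs i) (Finset.sum_nonneg fun j _ => mul_nonneg (hc j) ?_)
    simp only [Pi.single_apply]
    split_ifs <;> norm_num
  · simp only [Pi.add_apply, Finset.sum_apply, Pi.smul_apply, smul_eq_mul, add_smul,
      Finset.sum_add_distrib, Finset.sum_smul, add_assoc]
    rw [Finset.sum_comm (s := Finset.univ (α := Fin k))]
    congr 2
    refine Finset.sum_congr rfl fun j _ => ?_
    simp [Pi.single_apply, (hι j).2, ite_smul]
  · simp only [Pi.add_apply, Finset.sum_apply, Pi.smul_apply, smul_eq_mul, mul_add,
      Finset.sum_add_distrib, Finset.mul_sum]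
    rw [Finset.sum_comm (s := Finset.univ (α := Fin k))]
    have : ∀ j, ∑ i, α i * (c j * (Pi.single (ι j) (1 : ℝ) : Fin k → ℝ) i) = 0 := fun j => by
      simp [Pi.single_apply, (hι j).1]
    simpa [this] using hs1

theorem latticeFree_inducedSet (hvalid : ValidIneq k r f α 1) :
    LatticeFree (inducedSet k r f α) := by
  intro x hx hxint
  have hcont : Filter.Tendsto (fun e : ℝ => x + e • (x - f)) (nhds 0) (nhds x) := by
    have : Continuous fun e : ℝ => x + e • (x - f) := by fun_prop
    simpa using this.tendsto 0
  have hev := (hcont (mem_interior_iff_mem_nhds.mp hx))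
  obtain ⟨ε, hε, hball⟩ := Metric.mem_nhds_iff.mp hev
  have hmem : x + (ε / 2) • (x - f) ∈ inducedSet k r f α :=
    hball (by rw [Metric.mem_ball, dist_zero_right, Real.norm_eq_abs, abs_of_pos] <;> linarith)
  obtain ⟨s, hs, hxs, hs1⟩ := exists_weights_of_mem_inducedSet hmem
  have he0 : 0 < ε / 2 := half_pos hε
  set e := ε / 2
  have he : 0 < 1 + e := by positivity
  have hx' : x = f + ∑ i, ((1 + e)⁻¹ • s) i • r i := by
    have h1 : (1 + e) • (x - f) = ∑ i, s i • r i := by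
      have : (1 + e) • (x - f) = x + e • (x - f) - f := by rw [add_smul, one_smul]; abel
      rw [this, hxs]; abel
    have h2 : x - f = (1 + e)⁻¹ • ∑ i, s i • r i := by
      rw [← h1, smul_smul, inv_mul_cancel₀ he.ne', one_smul]
    simp only [Pi.smul_apply, smul_assoc, ← Finset.smul_sum, ← h2]
    abel
  have := hvalid (x, (1 + e)⁻¹ • s) ⟨hxint, fun i => mul_nonneg (by positivity) (hs i), hx'⟩
  have h3 : ∑ i, α i * ((1 + e)⁻¹ • s) i = (1 + e)⁻¹ * ∑ i, α i * s i := by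
    rw [Finset.mul_sum]
    refine Finset.sum_congr rfl fun i _ => ?_
    simp only [Pi.smul_apply, smul_eq_mul]
    ring
  rw [h3] at this
  have h4 : (1 + e)⁻¹ * ∑ i, α i * s i ≤ (1 + e)⁻¹ * 1 := by gcongr
  have h5 : (1 + e)⁻¹ < 1 := inv_lt_one_of_one_lt₀ (by linarith)
  linarith

/-- An affine function that is nonnegative on the induced set dominates the height of the
relaxation. -/
theorem height_mul_le_of_nonneg_on_inducedSet (hα : ∀ i, 0 ≤ α i) (g : Pt →ᵃ[ℝ] ℝ)
    (hg : ∀ x ∈ inducedSet k r f α, 0 ≤ g x) :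
    ∀ p ∈ relaxP k r f, (1 - ∑ i, α i * p.2 i) * g f ≤ g p.1 := by
  rintro ⟨x, s⟩ ⟨hs, hx⟩
  simp only at hs hx ⊢
  have hadd : ∀ v : Pt, g (f + v) = g f + g.linear v := fun v => by
    rw [g.apply_eq_linear_add (f + v), g.apply_eq_linear_add f, map_add]; ring
  have hr : ∀ i, -(α i * g f) ≤ g.linear (r i) := by
    intro i
    rcases (hα i).eq_or_lt with h | h
    · have hray : ∀ c : ℝ, 0 ≤ c → 0 ≤ g f + c * g.linear (r i) := fun c hc => by
        simpa [hadd] using hg _ (add_smul_mem_inducedSet h.symm hc)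
      rw [← h]
      by_contra hneg
      have hneg : g.linear (r i) < 0 := by linarith
      have h0 := hray 0 le_rfl
      have := hray ((g f + 1) / -g.linear (r i)) (div_nonneg (by linarith) (by linarith))
      have e : (g f + 1) / -g.linear (r i) * g.linear (r i) = -(g f + 1) := by
        rw [div_neg, neg_mul, div_mul_cancel₀ _ hneg.ne]
      linarith
    · have := hg _ (add_inv_smul_mem_inducedSet h)
      rw [hadd, map_smul, smul_eq_mul] at this
      have h2 := mul_le_mul_of_nonneg_left this h.le
      rw [mul_add, mul_inv_cancel_left₀ h.ne'] at h2
      linarith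
  rw [hx, hadd, map_sum]
  have : ∑ i, -(α i * g f) * s i ≤ ∑ i, g.linear (s i • r i) := by
    refine Finset.sum_le_sum fun i _ => ?_
    rw [map_smul, smul_eq_mul]
    nlinarith [mul_le_mul_of_nonneg_right (hr i) (hs i)]
  have e : ∑ i, -(α i * g f) * s i = -((∑ i, α i * s i) * g f) := by
    rw [Finset.sum_mul, ← Finset.sum_neg_distrib]
    exact Finset.sum_congr rfl fun i _ => by ring
  linarith

end InducedSet

theorem splitSeq_closures (k : ℕ) (r : Fin k → Pt) (f : Pt) (α : Fin k → ℝ)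
    (u v w : Pt →ᵃ[ℝ] ℝ) (hsum : ∀ x, u x + v x + w x = 1)
    (hu : ∀ x, IsIntPt x → ∃ n : ℤ, u x = n) (hv : ∀ x, IsIntPt x → ∃ n : ℤ, v x = n)
    (hw : ∀ x, IsIntPt x → ∃ n : ℤ, w x = n) :
    SplitSeq (closures k r f) (fun p => 1 - ∑ i, α i * p.2 i)
      (fun p => u p.1) (fun p => v p.1) (fun p => w p.1) := by
  refine ⟨fun n p _ => hsum p.1, fun n P Q R A B E H p hp => ?_⟩
  obtain ⟨π, m, hπ⟩ := ((P : ℝ) • u + (Q : ℝ) • v + (R : ℝ) • w).exists_int_coeffs fun x hx => by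
    obtain ⟨a, ha⟩ := hu x hx
    obtain ⟨b, hb⟩ := hv x hx
    obtain ⟨c, hc⟩ := hw x hx
    exact ⟨P * a + Q * b + R * c, by simp [ha, hb, hc]⟩
  have hform : ∀ x, (P : ℝ) * u x + Q * v x + R * w x = ∑ j, (π j : ℝ) * x j + m := by
    simpa using hπ
  have hp' := Set.mem_iInter₂.mp hp π (-m)
  refine convexHull_min (t := {p : Pt × (Fin k → ℝ) |
    1 - ∑ i, α i * p.2 i ≤ A * u p.1 + B * v p.1 + E * w p.1}) ?_ ?_ hp'
  · rintro q (⟨hq, hs⟩ | ⟨hq, hs⟩)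
    · refine H q hq (Or.inl ?_)
      simp only [Set.mem_ofPred_eq, Int.cast_neg] at hs
      rw [hform]; linarith
    · refine H q hq (Or.inr ?_)
      simp only [Set.mem_ofPred_eq, Int.cast_neg] at hs
      rw [hform]; linarith
  · intro q hq q' hq' a b ha hb hab
    simp only [Set.mem_ofPred_eq] at hq hq' ⊢
    have hT : ∑ i, α i * (a • q + b • q').2 i =
        a * ∑ i, α i * q.2 i + b * ∑ i, α i * q'.2 i := by
      rw [Finset.mul_sum, Finset.mul_sum, ← Finset.sum_add_distrib]
      refine Finset.sum_congr rfl fun i _ => ?_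
      simp only [Prod.snd_add, Prod.smul_snd, Pi.add_apply, Pi.smul_apply, smul_eq_mul]
      ring
    rw [hT]
    simp only [Prod.fst_add, Prod.smul_fst, Convex.combo_affine_apply hab, smul_eq_mul]
    have h1 := mul_le_mul_of_nonneg_left hq ha
    have h2 := mul_le_mul_of_nonneg_left hq' hb
    linarith

section T3

theorem IsT3.exists_bases {S : Set Pt} (hS : IsT3 S) (hfree : LatticeFree S) :
    ∃ b c : AffineBasis (Fin 3) ℝ Pt, S = {x | ∀ i, 0 ≤ b.coord i x} ∧
      interior S = {x | ∀ i, 0 < b.coord i x} ∧ (∀ i, IsIntPt (c i)) ∧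
      (∀ i, b.coord i (c i) = 0) ∧ (∀ i j, i ≠ j → 0 < b.coord i (c j)) ∧
      ∀ x, IsIntPt x → x ∈ S → ∃ j, x = c j := by
  obtain ⟨v0, v1, v2, hind, -, -, -, rfl, ⟨y2, ⟨h2, i2⟩, u2⟩, ⟨y0, ⟨h0, i0⟩, u0⟩,
    ⟨y1, ⟨h1, i1⟩, u1⟩, hfr⟩ := hS
  have htop : affineSpan ℝ (Set.range ![v0, v1, v2]) = ⊤ := by
    rw [hind.affineSpan_eq_top_iff_card_eq_finrank_add_one]; simp
  let b : AffineBasis (Fin 3) ℝ Pt := ⟨![v0, v1, v2], hind, htop⟩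
  have hb0 : b 0 = v0 := rfl
  have hb1 : b 1 = v1 := rfl
  have hb2 : b 2 = v2 := rfl
  have hrange : Set.range b = {v0, v1, v2} := by
    change Set.range ![v0, v1, v2] = _
    simp only [Matrix.range_cons, Matrix.range_empty, Set.union_empty, Set.singleton_union]
  have hL : convexHull ℝ {v0, v1, v2} = {x | ∀ i, 0 ≤ b.coord i x} := by
    rw [← hrange, b.convexHull_eq_nonneg_coord]
  have hLint : interior (convexHull ℝ {v0, v1, v2}) = {x | ∀ i, 0 < b.coord i x} := by
    rw [← hrange, b.interior_convexHull]
  have hpos : ∀ i j k, ∀ y ∈ openSegment ℝ (b j) (b k), i = j ∨ i = k → j ≠ k → 0 < b.coord i y := by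
    rintro i j k y ⟨s, t, hs, ht, hst, rfl⟩ hi hjk
    rw [Convex.combo_affine_apply hst, b.coord_apply, b.coord_apply]
    rcases hi with rfl | rfl
    · simp [hjk, hs]
    · simp [hjk.symm, ht]
  have hzero : ∀ i j k, ∀ y ∈ openSegment ℝ (b j) (b k), i ≠ j → i ≠ k → b.coord i y = 0 := by
    rintro i j k y ⟨s, t, hs, ht, hst, rfl⟩ hj hk
    rw [Convex.combo_affine_apply hst, b.coord_apply, b.coord_apply]
    simp [hj, hk]
  rw [← hb0, ← hb1] at h2
  rw [← hb1, ← hb2] at h0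
  rw [← hb0, ← hb2] at h1
  let y : Fin 3 → Pt := ![y0, y1, y2]
  have hz : ∀ i, b.coord i (y i) = 0 := by
    intro i
    fin_cases i
    · exact hzero 0 1 2 y0 h0 (by decide) (by decide)
    · exact hzero 1 0 2 y1 h1 (by decide) (by decide)
    · exact hzero 2 0 1 y2 h2 (by decide) (by decide)
  have hp : ∀ i j, i ≠ j → 0 < b.coord i (y j) := by
    intro i j hij
    fin_cases j
    · exact hpos i 1 2 y0 h0 (by revert hij; fin_cases i <;> decide) (by decide)
    · exact hpos i 0 2 y1 h1 (by revert hij; fin_cases i <;> decide) (by decide)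
    · exact hpos i 0 1 y2 h2 (by revert hij; fin_cases i <;> decide) (by decide)
  have hdet : IsUnit (b.toMatrix y) := by
    rw [Matrix.isUnit_iff_isUnit_det, isUnit_iff_ne_zero, Matrix.det_fin_three]
    simp only [AffineBasis.toMatrix_apply, hz]
    have p1 := mul_pos (mul_pos (hp 1 0 (by decide)) (hp 2 1 (by decide))) (hp 0 2 (by decide))
    have p2 := mul_pos (mul_pos (hp 2 0 (by decide)) (hp 0 1 (by decide))) (hp 1 2 (by decide))
    nlinarith
  obtain ⟨hi, ht⟩ := (b.isUnit_toMatrix_iff y).mp hdet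
  refine ⟨b, ⟨y, hi, ht⟩, hL, hLint, ?_, hz, hp, ?_⟩
  · intro i
    fin_cases i
    exacts [i0, i1, i2]
  · intro x hx hxS
    have hxf : x ∈ frontier (convexHull ℝ {v0, v1, v2}) :=
      ⟨subset_closure hxS, fun h => hfree x h hx⟩
    rcases hfr x hx hxf with h | h | h
    · exact ⟨2, u2 x ⟨h, hx⟩⟩
    · exact ⟨0, u0 x ⟨h, hx⟩⟩
    · exact ⟨1, u1 x ⟨h, hx⟩⟩

theorem AffineBasis.apply_eq_sum_coord (c : AffineBasis (Fin 3) ℝ Pt) (g : Pt →ᵃ[ℝ] ℝ) (x : Pt) :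
    g x = c.coord 0 x * g (c 0) + c.coord 1 x * g (c 1) + c.coord 2 x * g (c 2) := by
  have h := c.sum_coord_apply_eq_one x
  have hx := c.linear_combination_coord_eq_self x
  rw [Fin.sum_univ_three] at h hx
  conv_lhs => rw [← hx]
  rw [g.apply_eq_linear_add, g.apply_eq_linear_add (c 0), g.apply_eq_linear_add (c 1),
    g.apply_eq_linear_add (c 2)]
  simp only [map_add, map_smul, smul_eq_mul]
  linear_combination (- g 0) * h

end T3

theorem splitRank_ne_top {k : ℕ} {r : Fin k → Pt} {f : Pt} {α : Fin k → ℝ} {γ : ℝ} {n : ℕ}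
    (h : ∀ p ∈ closures k r f n, γ ≤ ∑ i, α i * p.2 i) : splitRank k r f α γ ≠ ⊤ :=
  ne_top_of_le_ne_top (ENat.natCast_ne_top n) (sInf_le ⟨n, rfl, h⟩)

theorem t3_finite_split_rank (k : ℕ)
    (hk : 1 ≤ k)
    (r : Fin k → Pt) (f : Pt)
    (hr_rat : ∀ i, IsRatPt (r i)) (hr_ne : ∀ i, r i ≠ 0)
    (hf_rat : IsRatPt f) (hf_int : ¬ IsIntPt f)
    (hne : (mixedP k r f).Nonempty)
    (α : Fin k → ℝ) (hα : ∀ i, 0 ≤ α i)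
    (hvalid : ValidIneq k r f α 1)
    (hshape : IsT3 (inducedSet k r f α))
    (hfint : f ∈ interior (inducedSet k r f α)) :
    splitRank k r f α 1 ≠ ⊤ := by
  obtain ⟨b, c, hL, hLint, hc, hz, hp, hlat⟩ :=
    hshape.exists_bases (latticeFree_inducedSet hvalid)
  have hφ : ∀ i, 0 < b.coord i f := by rwa [hLint] at hfint
  have hempty : ∀ x, IsIntPt x → (∀ i, 0 ≤ c.coord i x) → ∃ j, x = c j := by
    intro x hx hcx
    refine hlat x hx ?_
    rw [hL]
    have hnn : ∀ i j, 0 ≤ b.coord i (c j) := fun i j => by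
      by_cases h : i = j
      · rw [h, hz]
      · exact (hp i j h).le
    intro i
    rw [c.apply_eq_sum_coord (b.coord i) x]
    exact add_nonneg (add_nonneg (mul_nonneg (hcx 0) (hnn i 0)) (mul_nonneg (hcx 1) (hnn i 1)))
      (mul_nonneg (hcx 2) (hnn i 2))
  have hcint := fun i x (hx : IsIntPt x) => c.coord_integral_of_empty hc hempty hx i
  have hseq := splitSeq_closures k r f α (c.coord 0) (c.coord 1) (c.coord 2)
    (fun x => by have h := c.sum_coord_apply_eq_one x; rwa [Fin.sum_univ_three] at h)
    (hcint 0) (hcint 1) (hcint 2)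
  have hle : ∀ i, ∀ p ∈ relaxP k r f, 1 - ∑ j, α j * p.2 j ≤
      b.coord i (c 0) / b.coord i f * c.coord 0 p.1 +
      b.coord i (c 1) / b.coord i f * c.coord 1 p.1 +
      b.coord i (c 2) / b.coord i f * c.coord 2 p.1 := fun i p hpp => by
    have h := height_mul_le_of_nonneg_on_inducedSet hα (b.coord i)
      (fun x hx => by rw [hL] at hx; exact hx i) p hpp
    rw [← le_div_iff₀ (hφ i), c.apply_eq_sum_coord (b.coord i) p.1] at h
    exact h.trans_eq (by ring)
  have hBpos : ∀ i j, i ≠ j → 0 < b.coord i (c j) / b.coord i f := fun i j h =>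
    div_pos (hp i j h) (hφ i)
  have horient : ∀ i j l : Fin 3, i ≠ j → j ≠ l → i ≠ l →
      b.coord i (c j) / b.coord i f < b.coord i (c l) / b.coord i f ∨
      b.coord j (c i) / b.coord j f < b.coord j (c l) / b.coord j f := by
    intro i j l hij hjl hil
    by_contra! hcon
    have hval : ∀ m, b.coord m (c i + (c j - c l)) =
        b.coord m (c i) + b.coord m (c j) - b.coord m (c l) := fun m => by
      rw [(b.coord m).apply_eq_linear_add (c i + _), (b.coord m).apply_eq_linear_add (c i),
        (b.coord m).apply_eq_linear_add (c j), (b.coord m).apply_eq_linear_add (c l), map_add,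
        map_sub]
      ring
    have hvalc : c.coord l (c i + (c j - c l)) = -1 := by
      rw [(c.coord l).apply_eq_linear_add, map_add, map_sub]
      have e1 := (c.coord l).apply_eq_linear_add (c i)
      have e2 := (c.coord l).apply_eq_linear_add (c j)
      have e3 := (c.coord l).apply_eq_linear_add (c l)
      rw [c.coord_apply_ne hil.symm] at e1
      rw [c.coord_apply_ne hjl.symm] at e2
      rw [c.coord_apply_eq] at e3
      linarith
    have hmem : c i + (c j - c l) ∈ inducedSet k r f α := by
      rw [hL]
      intro m
      rw [hval]
      have hm : m = i ∨ m = j ∨ m = l := by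
        clear hval hvalc hcon
        revert i j l m
        decide
      rcases hm with rfl | rfl | rfl
      · rw [hz]
        have := (div_le_div_iff_of_pos_right (hφ m)).mp hcon.1
        linarith
      · rw [hz]
        have := (div_le_div_iff_of_pos_right (hφ m)).mp hcon.2
        linarith
      · rw [hz]
        linarith [hp m i hil.symm, hp m j hjl.symm]
    obtain ⟨m, hm⟩ := hlat _ ((hc i).add ((hc j).sub (hc l))) hmem
    rw [hm, c.coord_apply] at hvalc
    split_ifs at hvalc <;> linarith
  have h01 := horient 0 1 2 (by decide) (by decide) (by decide)
  have h12 := horient 1 2 0 (by decide) (by decide) (by decide)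
  have h20 := horient 2 0 1 (by decide) (by decide) (by decide)
  have ht1 : ∀ p ∈ closures k r f 0, 1 - ∑ i, α i * p.2 i ≤ 1 := fun p hpp => by
    have : 0 ≤ ∑ i, α i * p.2 i := Finset.sum_nonneg fun i _ => mul_nonneg (hα i) (hpp.1 i)
    linarith
  suffices H : ∃ n, ∀ p ∈ closures k r f n, 1 - ∑ i, α i * p.2 i ≤ 0 by
    obtain ⟨n, hn⟩ := H
    exact splitRank_ne_top fun p hpp => by linarith [hn p hpp]
  rcases lt_or_ge (b.coord 0 (c 1) / b.coord 0 f) (b.coord 0 (c 2) / b.coord 0 f) with h | h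
  · have h3 := h20.resolve_right h.le.not_gt
    have h2 := h12.resolve_right h3.le.not_gt
    refine hseq.exists_height_nonpos
      ⟨fun p hpp => ?_, fun p hpp => ?_, fun p hpp => ?_, hBpos 0 1 (by decide),
        hBpos 1 2 (by decide), hBpos 2 0 (by decide), h, h2, h3⟩ ht1
    · simpa [hz] using hle 0 p hpp
    · simpa [hz, add_comm] using hle 1 p hpp
    · simpa [hz] using hle 2 p hpp
  · have h2 := h01.resolve_left h.not_gt
    have h3 := h12.resolve_left h2.le.not_gt
    have h1 := h20.resolve_left h3.le.not_gt
    refine hseq.swap.exists_height_nonpos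
      ⟨fun p hpp => ?_, fun p hpp => ?_, fun p hpp => ?_, hBpos 1 0 (by decide),
        hBpos 0 2 (by decide), hBpos 2 1 (by decide), h2, h1, h3⟩ ht1
    · simpa [hz] using hle 1 p hpp
    · simpa [hz, add_comm] using hle 0 p hpp
    · simpa [hz, add_comm] using hle 2 p hpp
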